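/- arXiv:1709.00331 — 9 statements merged into one kernel-verified Lean document; each statement's English description precedes it below -/
import Mathlib

section
/- Let Ω ⊆ ℝ × (0,∞) be open and let u : ℝ × ℝ → ℝ be twice continuously differentiable on Ω and satisfy the (2+1)-dimensional equivariant Faddeev equation at every point of Ω. Define the energy density e(t,r) = r·[(1 + sin²(u)/r²)·(u_t² + u_r²)/2 + sin²(u)/(2r²)] and the flux p(t,r) = −r·(1 + sin²(u)/r²)·u_t·u_r. Then ∂_t e + ∂_r p = 0 at every point of Ω (local energy conservation for the equivariant Faddeev model). -/
/-- Local energy conservation for the (2+1)-dimensional equivariant Faddeev model: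
if `u` is `C²` on an open set `Ω ⊆ ℝ × (0,∞)` and satisfies the equivariant Faddeev
equation there, then the energy density `e` and the flux `p` satisfy `∂ₜ e + ∂ᵣ p = 0`
at every point of `Ω`. -/
theorem stmt_0
    (Ω : Set (ℝ × ℝ)) (hΩopen : IsOpen Ω) (hΩpos : ∀ q ∈ Ω, 0 < q.2)
    (u ut ur utt urr : ℝ × ℝ → ℝ)
    (hu : ContDiffOn ℝ 2 u Ω)
    (hut : ∀ q : ℝ × ℝ, ut q = deriv (fun t => u (t, q.2)) q.1)
    (hur : ∀ q : ℝ × ℝ, ur q = deriv (fun r => u (q.1, r)) q.2)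
    (hutt : ∀ q : ℝ × ℝ, utt q = deriv (fun t => ut (t, q.2)) q.1)
    (hurr : ∀ q : ℝ × ℝ, urr q = deriv (fun r => ur (q.1, r)) q.2)
    (heq : ∀ q ∈ Ω,
      (1 + Real.sin (u q) ^ 2 / q.2 ^ 2) * (utt q - urr q)
        - (1 - Real.sin (u q) ^ 2 / q.2 ^ 2) * ur q / q.2
        + Real.sin (2 * u q) / (2 * q.2 ^ 2) * (1 + ut q ^ 2 - ur q ^ 2) = 0)
    (e p : ℝ × ℝ → ℝ)
    (he : ∀ q : ℝ × ℝ, e q =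
      q.2 * ((1 + Real.sin (u q) ^ 2 / q.2 ^ 2) * (ut q ^ 2 + ur q ^ 2) / 2
        + Real.sin (u q) ^ 2 / (2 * q.2 ^ 2)))
    (hp : ∀ q : ℝ × ℝ, p q = -q.2 * (1 + Real.sin (u q) ^ 2 / q.2 ^ 2) * ut q * ur q) :
    ∀ q ∈ Ω, deriv (fun t => e (t, q.2)) q.1 + deriv (fun r => p (q.1, r)) q.2 = 0 := by
  rintro ⟨t, r⟩ hq
  have hr : (0:ℝ) < r := hΩpos _ hq
  have lineT : ∀ a b : ℝ, HasDerivAt (fun s : ℝ => ((s, b) : ℝ × ℝ)) ((1, 0) : ℝ × ℝ) a :=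
    fun a b => (hasDerivAt_id a).prodMk (hasDerivAt_const a b)
  have lineR : ∀ a b : ℝ, HasDerivAt (fun s : ℝ => ((a, s) : ℝ × ℝ)) ((0, 1) : ℝ × ℝ) b :=
    fun a b => (hasDerivAt_const b a).prodMk (hasDerivAt_id b)
  have hC : ∀ q ∈ Ω, ContDiffAt ℝ 2 u q := fun q h => hu.contDiffAt (hΩopen.mem_nhds h)
  have hD : ∀ q ∈ Ω, HasFDerivAt u (fderiv ℝ u q) q := fun q h =>
    ((hC q h).differentiableAt (by norm_num)).hasFDerivAt
  have huT : ∀ q ∈ Ω, HasDerivAt (fun s => u (s, q.2)) (fderiv ℝ u q (1, 0)) q.1 :=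
    fun q h => (hD q h).comp_hasDerivAt q.1 (lineT q.1 q.2)
  have huR : ∀ q ∈ Ω, HasDerivAt (fun s => u (q.1, s)) (fderiv ℝ u q (0, 1)) q.2 :=
    fun q h => (hD q h).comp_hasDerivAt q.2 (lineR q.1 q.2)
  have eT : ∀ q ∈ Ω, ut q = fderiv ℝ u q (1, 0) := fun q h => by
    rw [hut, (huT q h).deriv]
  have eR : ∀ q ∈ Ω, ur q = fderiv ℝ u q (0, 1) := fun q h => by
    rw [hur, (huR q h).deriv]
  have hD2 : HasFDerivAt (fderiv ℝ u) (fderiv ℝ (fderiv ℝ u) (t, r)) (t, r) :=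
    (((hC _ hq).fderiv_right (m := 1) (by norm_num)).differentiableAt
      (by norm_num)).hasFDerivAt
  have hsym : IsSymmSndFDerivAt ℝ u (t, r) :=
    (hC _ hq).isSymmSndFDerivAt (by simp)
  have nb : ∀ᶠ q in nhds ((t, r) : ℝ × ℝ), q ∈ Ω := hΩopen.mem_nhds hq
  have fT : HasFDerivAt ut ((fderiv ℝ (fderiv ℝ u) (t, r)).flip (1, 0)) (t, r) := by
    refine HasFDerivAt.congr_of_eventuallyEq (f := fun q => fderiv ℝ u q (1, 0)) ?_ ?_
    · have := hD2.clm_apply (hasFDerivAt_const ((1, 0) : ℝ × ℝ) ((t, r) : ℝ × ℝ))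
      simpa using this
    · filter_upwards [nb] with q h using eT q h
  have fR : HasFDerivAt ur ((fderiv ℝ (fderiv ℝ u) (t, r)).flip (0, 1)) (t, r) := by
    refine HasFDerivAt.congr_of_eventuallyEq (f := fun q => fderiv ℝ u q (0, 1)) ?_ ?_
    · have := hD2.clm_apply (hasFDerivAt_const ((0, 1) : ℝ × ℝ) ((t, r) : ℝ × ℝ))
      simpa using this
    · filter_upwards [nb] with q h using eR q h
  have dTT := fT.comp_hasDerivAt t (lineT t r)
  have dTR := fT.comp_hasDerivAt r (lineR t r)
  have dRT := fR.comp_hasDerivAt t (lineT t r)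
  have dRR := fR.comp_hasDerivAt r (lineR t r)
  simp only [ContinuousLinearMap.flip_apply] at dTT dTR dRT dRR
  have hs := hsym.eq (1, 0) (0, 1)
  rw [← hs] at dTR
  have vtt : utt (t, r) = _ := (hutt (t, r)).trans dTT.deriv
  have vrr : urr (t, r) = _ := (hurr (t, r)).trans dRR.deriv
  rw [← vtt] at dTT
  rw [← vrr] at dRR
  have dT := huT _ hq
  have dR := huR _ hq
  rw [← eT _ hq] at dT
  rw [← eR _ hq] at dR
  have E := heq _ hq
  generalize fderiv ℝ (fderiv ℝ u) (t, r) (1, 0) (0, 1) = m at dTR dRT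
  simp only at dT dR E
  have hr0 : r ≠ 0 := hr.ne'
  have D1 := ((((((dT.sin.pow 2).div_const (r ^ 2)).const_add 1).mul
    ((dTT.pow 2).add (dRT.pow 2))).div_const 2).add
    ((dT.sin.pow 2).div_const (2 * r ^ 2))).const_mul r
  have D2 := ((((hasDerivAt_id r).neg).mul (((dR.sin.pow 2).div ((hasDerivAt_id r).pow 2)
    (by simpa using hr0)).const_add 1)).mul dTR).mul dRR
  have e1 : (fun s => e (s, r)) = _ := funext fun s => he (s, r)
  have e2 : (fun s => p (t, s)) = _ := funext fun s => hp (t, s)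
  have F1 := D1.deriv
  have F2 := D2.deriv
  simp only at e1 e2 ⊢
  rw [e1, e2]
  refine (congrArg₂ (· + ·) F1 F2).trans ?_
  rw [Real.sin_two_mul] at E
  simp [Function.comp_def]
  field_simp at E ⊢
  linear_combination (ut (t, r)) * E
end

section
/- For every E > 0 there exists a constant C > 0, depending only on E, with the following property: if u : [0,∞) → ℝ is continuous, continuously differentiable on (0,∞), u(0) = kπ for some integer k, and the energy ∫₀^∞ [(1 + sin²(u(r))/r²)·u'(r)²/2 + sin²(u(r))/(2r²)]·r dr is at most E, then |u(r) − u(0)| ≤ C·min(1, r^{1/2}) for every r > 0. -/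
open MeasureTheory

noncomputable def Gfun (x : ℝ) : ℝ := ∫ t in (0:ℝ)..x, |Real.sin t|

lemma Gfun_cont : Continuous (fun t : ℝ => |Real.sin t|) := by fun_prop

lemma Gfun_hasDerivAt (x : ℝ) : HasDerivAt Gfun (|Real.sin x|) x :=
  intervalIntegral.integral_hasDerivAt_right (Gfun_cont.intervalIntegrable _ _)
    (Gfun_cont.stronglyMeasurableAtFilter _ _) Gfun_cont.continuousAt

lemma Gfun_neg (x : ℝ) : Gfun (-x) = - Gfun x := by
  have h := intervalIntegral.integral_comp_neg (a := 0) (b := x) (fun t => |Real.sin t|)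
  simp only [Real.sin_neg, abs_neg, neg_zero] at h
  unfold Gfun
  rw [h, intervalIntegral.integral_symm]

lemma Gfun_lower1 (x : ℝ) (hx : 0 ≤ x) (hx2 : x ≤ Real.pi / 2) : x ^ 2 / Real.pi ≤ Gfun x := by
  have h : ∫ t in (0:ℝ)..x, (2 / Real.pi * t) ≤ Gfun x := by
    apply intervalIntegral.integral_mono_on hx
    · exact (by fun_prop : Continuous fun t : ℝ => 2 / Real.pi * t).intervalIntegrable _ _
    · exact Gfun_cont.intervalIntegrable _ _
    · intro t ht
      exact (Real.mul_le_sin ht.1 (ht.2.trans hx2)).trans (le_abs_self _)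
  rw [intervalIntegral.integral_const_mul, integral_id] at h
  refine le_trans (le_of_eq ?_) h
  ring

lemma Gfun_lower2 (x : ℝ) (hx2 : Real.pi / 2 ≤ x) : x / 4 ≤ Gfun x := by
  have hpi := Real.pi_gt_three
  have hx : 0 ≤ x := by linarith
  have h : ∫ t in (0:ℝ)..x, Real.sin t ^ 2 ≤ Gfun x := by
    apply intervalIntegral.integral_mono_on hx
    · exact (by fun_prop : Continuous fun t : ℝ => Real.sin t ^ 2).intervalIntegrable _ _
    · exact Gfun_cont.intervalIntegrable _ _
    · intro t ht
      rw [← sq_abs]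
      have := Real.abs_sin_le_one t
      have := abs_nonneg (Real.sin t)
      nlinarith
  rw [integral_sin_sq] at h
  have h2 := Real.sin_two_mul x
  have h3 := Real.sin_le_one (2 * x)
  simp only [Real.sin_zero, zero_mul] at h
  nlinarith

lemma Gfun_lower (x : ℝ) : (|x| ≤ Real.pi / 2 ∧ |x| ^ 2 ≤ Real.pi * |Gfun x|) ∨
    |x| ≤ 4 * |Gfun x| := by
  have key : |Gfun x| = |Gfun (|x|)| := by
    rcases abs_choice x with h | h <;> rw [h]
    rw [Gfun_neg, abs_neg]
  rw [key]
  have h0 := le_abs_self (Gfun |x|)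
  have hpi := Real.pi_pos
  rcases le_total (|x|) (Real.pi / 2) with h | h
  · left
    have := Gfun_lower1 _ (abs_nonneg x) h
    rw [div_le_iff₀ hpi] at this
    exact ⟨h, by nlinarith⟩
  · right
    have := Gfun_lower2 _ h
    linarith

noncomputable def dens (u : ℝ → ℝ) (r : ℝ) : ℝ :=
  ((1 + Real.sin (u r) ^ 2 / r ^ 2) * (deriv u r) ^ 2 / 2
              + Real.sin (u r) ^ 2 / (2 * r ^ 2)) * r

lemma dens_eq (u : ℝ → ℝ) (r : ℝ) (hr : 0 < r) : dens u r =
    |deriv u r| ^ 2 * r / 2 + |Real.sin (u r)| ^ 2 * |deriv u r| ^ 2 / (2 * r)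
      + |Real.sin (u r)| ^ 2 / (2 * r) := by
  rw [sq_abs, sq_abs, dens]
  field_simp

lemma core (E : ℝ) (hE : 0 < E) (u : ℝ → ℝ) (k : ℤ)
    (hc : ContinuousOn u (Set.Ici 0)) (hd : ContDiffOn ℝ 1 u (Set.Ioi 0))
    (h0 : u 0 = (k : ℝ) * Real.pi)
    (hint : (∫⁻ r in Set.Ioi (0 : ℝ), ENNReal.ofReal (dens u r)) ≤ ENNReal.ofReal E)
    (R : ℝ) (hR : 0 < R) (a b : ℝ) (ha : 0 ≤ a) (hb : 0 ≤ b)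
    (hab : ∀ ρ, 0 < ρ → ρ ≤ R → |Real.sin (u ρ)| * |deriv u ρ| ≤ a * dens u ρ + b) :
    |Gfun (u R - u 0)| ≤ a * E + b * R := by
  have hdc : ContinuousOn (deriv u) (Set.Ioi 0) :=
    hd.continuousOn_deriv_of_isOpen isOpen_Ioi le_rfl
  have huc : ContinuousOn u (Set.Ioi 0) := hd.continuousOn
  have hsin : ∀ x, |Real.sin (x - u 0)| = |Real.sin x| := by
    intro x
    rw [h0, Real.sin_sub_int_mul_pi, abs_mul, abs_zpow]
    simp
  have hfc : ContinuousOn (dens u) (Set.Ioi 0) := by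
    unfold dens
    have hs : ContinuousOn (fun r => Real.sin (u r)) (Set.Ioi 0) :=
      Real.continuous_sin.comp_continuousOn huc
    have hi : ContinuousOn (fun r : ℝ => r) (Set.Ioi 0) := continuousOn_id
    refine ContinuousOn.mul (ContinuousOn.add (ContinuousOn.div_const (ContinuousOn.mul
      (continuousOn_const.add (ContinuousOn.div (hs.pow 2) (hi.pow 2) ?_)) (hdc.pow 2)) _)
      (ContinuousOn.div (hs.pow 2) (continuousOn_const.mul (hi.pow 2)) ?_)) hi
    · intro x hx; have : (0:ℝ) < x := hx; exact pow_ne_zero 2 this.ne'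
    · intro x hx; have : (0:ℝ) < x := hx; positivity
  have hder : ∀ x, 0 < x → HasDerivAt (fun r => Gfun (u r - u 0))
      (|Real.sin (u x)| * deriv u x) x := by
    intro x hx
    have h1 : HasDerivAt u (deriv u x) x :=
      ((hd.differentiableOn one_ne_zero).differentiableAt (Ioi_mem_nhds hx)).hasDerivAt
    have h2 := (Gfun_hasDerivAt (u x - u 0)).comp x (h1.sub_const (u 0))
    rw [hsin] at h2
    exact h2
  have hmain : ∀ ε, 0 < ε → ε < R →
      |Gfun (u R - u 0) - Gfun (u ε - u 0)| ≤ a * E + b * R := by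
    intro ε hε hεR
    have hsub : Set.Icc ε R ⊆ Set.Ioi 0 := fun x hx => lt_of_lt_of_le hε hx.1
    have hsubo : Set.Ioc ε R ⊆ Set.Ioi 0 := fun x hx => lt_trans hε hx.1
    have hfi : IntervalIntegrable (dens u) volume ε R :=
      (hfc.mono (by rwa [Set.uIcc_of_le hεR.le])).intervalIntegrable
    have hgi : IntervalIntegrable (fun x => |Real.sin (u x)| * deriv u x) volume ε R := by
      apply ContinuousOn.intervalIntegrable
      rw [Set.uIcc_of_le hεR.le]
      exact (((Real.continuous_sin.comp_continuousOn huc).abs).mul hdc).mono hsub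
    have hftc := intervalIntegral.integral_eq_sub_of_hasDerivAt
      (fun x hx => hder x (hsub (by rwa [Set.uIcc_of_le hεR.le] at hx))) hgi
    have hfE : ∫ x in ε..R, dens u x ≤ E := by
      rw [intervalIntegral.integral_of_le hεR.le]
      rw [← ENNReal.ofReal_le_ofReal_iff hE.le, ofReal_integral_eq_lintegral_ofReal]
      · exact (lintegral_mono_set hsubo).trans hint
      · exact (intervalIntegrable_iff_integrableOn_Ioc_of_le hεR.le).1 hfi
      · filter_upwards [ae_restrict_mem measurableSet_Ioc] with x hx
        have : 0 < x := hsubo hx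
        simp only [Pi.zero_apply, dens]
        positivity
    rw [← hftc, ← Real.norm_eq_abs]
    have hle := intervalIntegral.norm_integral_le_of_norm_le
      (f := fun x => |Real.sin (u x)| * deriv u x) (g := fun x => a * dens u x + b)
      (μ := volume) hεR.le (Filter.Eventually.of_forall fun x hx => by
        rw [Real.norm_eq_abs, abs_mul, abs_abs]
        exact hab x (hsubo hx) hx.2) ((hfi.const_mul a).add intervalIntegrable_const)
    refine hle.trans ?_
    rw [intervalIntegral.integral_add (hfi.const_mul a) intervalIntegrable_const,
      intervalIntegral.integral_const_mul, intervalIntegral.integral_const, smul_eq_mul]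
    have := mul_le_mul_of_nonneg_left hfE ha
    nlinarith
  have ht : Filter.Tendsto u (nhdsWithin 0 (Set.Ioi 0)) (nhds (u 0)) :=
    (hc 0 Set.self_mem_Ici).mono_left (nhdsWithin_mono _ Set.Ioi_subset_Ici_self)
  have hG : Continuous Gfun := continuous_iff_continuousAt.2
    fun x => (Gfun_hasDerivAt x).continuousAt
  have ht2 : Filter.Tendsto (fun ε => |Gfun (u R - u 0) - Gfun (u ε - u 0)|)
      (nhdsWithin 0 (Set.Ioi 0)) (nhds |Gfun (u R - u 0) - Gfun (u 0 - u 0)|) :=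
    (tendsto_const_nhds.sub ((hG.tendsto _).comp (ht.sub_const (u 0)))).abs
  have hz : Gfun (u 0 - u 0) = 0 := by simp [Gfun]
  rw [hz, sub_zero] at ht2
  refine le_of_tendsto ht2 ?_
  filter_upwards [Ioo_mem_nhdsGT hR] with ε hε
  exact hmain ε hε.1 hε.2

/-- For every energy bound `E > 0` there is `C > 0` depending only on `E` such that any
finite-energy equivariant configuration `u` with `u 0 = k·π` satisfies the decay estimate
`|u r - u 0| ≤ C · min 1 (√r)` for all `r > 0`. -/
theorem stmt_1 (E : ℝ) (hE : 0 < E) :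
    ∃ C : ℝ, 0 < C ∧
      ∀ (u : ℝ → ℝ) (k : ℤ),
        ContinuousOn u (Set.Ici 0) →
        ContDiffOn ℝ 1 u (Set.Ioi 0) →
        u 0 = (k : ℝ) * Real.pi →
        (∫⁻ r in Set.Ioi (0 : ℝ),
            ENNReal.ofReal (((1 + Real.sin (u r) ^ 2 / r ^ 2) * (deriv u r) ^ 2 / 2
              + Real.sin (u r) ^ 2 / (2 * r ^ 2)) * r)) ≤ ENNReal.ofReal E →
        ∀ r : ℝ, 0 < r → |u r - u 0| ≤ C * min 1 (Real.sqrt r) := by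
  have hpi := Real.pi_gt_three
  refine ⟨4 * (E + 1) + Real.pi / 2 + Real.sqrt (Real.pi * (E + 1)), by positivity, ?_⟩
  intro u k hc hd h0 hint R hR
  have hS : 0 ≤ Real.sqrt (Real.pi * (E + 1)) := Real.sqrt_nonneg _
  have hA : |Gfun (u R - u 0)| ≤ 1 * E + 0 * R := by
    refine core E hE u k hc hd h0 hint R hR 1 0 zero_le_one le_rfl ?_
    intro ρ hρ _
    rw [dens_eq u ρ hρ]
    set s := |Real.sin (u ρ)|
    set w := |deriv u ρ|
    have e : s * w = w ^ 2 * ρ / 2 + s ^ 2 / (2 * ρ) - (w * ρ - s) ^ 2 / (2 * ρ) := by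
      field_simp
      ring
    have p1 : 0 ≤ (w * ρ - s) ^ 2 / (2 * ρ) := by positivity
    have p2 : 0 ≤ s ^ 2 * w ^ 2 / (2 * ρ) := by positivity
    linarith
  have hB : |Gfun (u R - u 0)| ≤ R * E + (1 / 2) * R := by
    refine core E hE u k hc hd h0 hint R hR R (1/2) hR.le (by norm_num) ?_
    intro ρ hρ hρR
    rw [dens_eq u ρ hρ]
    set s := |Real.sin (u ρ)|
    set w := |deriv u ρ|
    have e : s * w = R * (s ^ 2 * w ^ 2 / (2 * ρ)) + ρ / (2 * R)
        - (R * (s * w) - ρ) ^ 2 / (2 * ρ * R) := by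
      field_simp
      ring
    have p1 : 0 ≤ (R * (s * w) - ρ) ^ 2 / (2 * ρ * R) := by positivity
    have p2 : 0 ≤ R * (w ^ 2 * ρ / 2) := by positivity
    have p3 : 0 ≤ R * (s ^ 2 / (2 * ρ)) := by positivity
    have p4 : ρ / (2 * R) ≤ 1 / 2 := by
      rw [div_le_iff₀ (by positivity)]
      linarith
    linarith
  rcases le_total 1 R with h1 | h1
  · rw [min_eq_left (Real.one_le_sqrt.2 h1), mul_one]
    rcases Gfun_lower (u R - u 0) with h | h
    · linarith [h.1]
    · linarith
  · have hs1 : Real.sqrt R ≤ 1 := Real.sqrt_le_one.2 h1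
    have hs0 : 0 ≤ Real.sqrt R := Real.sqrt_nonneg _
    have hsq : Real.sqrt R * Real.sqrt R = R := Real.mul_self_sqrt hR.le
    rw [min_eq_right hs1]
    have hG : |Gfun (u R - u 0)| ≤ (E + 1) * R := by nlinarith
    rcases Gfun_lower (u R - u 0) with h | h
    · have h2 : |u R - u 0| ≤ Real.sqrt (Real.pi * (E + 1)) * Real.sqrt R := by
        rw [← Real.sqrt_mul (by positivity)]
        apply Real.le_sqrt_of_sq_le
        have := mul_le_mul_of_nonneg_left hG Real.pi_pos.le
        nlinarith [h.2]
      have : 0 ≤ (4 * (E + 1) + Real.pi / 2) * Real.sqrt R := by positivity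
      nlinarith
    · have h3 : R ≤ Real.sqrt R := by nlinarith
      have h4 : (E + 1) * R ≤ (E + 1) * Real.sqrt R := by gcongr
      have : 0 ≤ (Real.pi / 2 + Real.sqrt (Real.pi * (E + 1))) * Real.sqrt R := by positivity
      nlinarith
end

section
/- Let u : [0,∞) → ℝ be continuous, continuously differentiable on (0,∞), with u(0) = kπ for some integer k, and let R > 0; assume s ↦ |sin(u(s))|·|u'(s)| is integrable on (0,R). Then, with I(w) := ∫₀^w |sin z| dz, one has I(|u(R) − u(0)|) ≤ ∫₀^R |sin(u(s))|·|u'(s)| ds, and consequently both I(|u(R) − u(0)|) ≤ (∫₀^R (sin²(u(s))/s²)·s ds)^{1/2} · (∫₀^R u'(s)²·s ds)^{1/2} and I(|u(R) − u(0)|) ≤ (∫₀^R (sin²(u(s))·u'(s)²/s²)·s ds)^{1/2} · (R²/2)^{1/2}. -/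
open MeasureTheory

lemma aux_abs_sin_add (z : ℝ) (k : ℤ) : |Real.sin (z + k * Real.pi)| = |Real.sin z| := by
  rw [Real.sin_add_int_mul_pi, abs_mul]
  simp

lemma aux_abs (a b : ℝ) (k : ℤ) (ha : a = k * Real.pi) :
    (∫ z in (0 : ℝ)..|b - a|, |Real.sin z|) = abs (∫ z in a..b, |Real.sin z|) := by
  have h1 : (∫ z in a..b, |Real.sin z|) = ∫ z in (0 : ℝ)..(b - a), |Real.sin z| := by
    have h := intervalIntegral.integral_comp_add_right (a := 0) (b := b - a)
      (fun z => |Real.sin z|) a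
    rw [zero_add, sub_add_cancel] at h
    rw [← h]
    congr 1
    ext z
    rw [ha, aux_abs_sin_add]
  rw [h1]
  rcases le_total 0 (b - a) with h | h
  · rw [abs_of_nonneg h, abs_of_nonneg]
    exact intervalIntegral.integral_nonneg h (fun _ _ => abs_nonneg _)
  · have h2 : (∫ z in (0 : ℝ)..(b - a), |Real.sin z|)
        = - ∫ z in (0 : ℝ)..(-(b - a)), |Real.sin z| := by
      have h := intervalIntegral.integral_comp_neg (a := 0) (b := -(b - a))
        (fun z => |Real.sin z|)
      simp only [Real.sin_neg, abs_neg, neg_neg, neg_zero] at h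
      rw [h, intervalIntegral.integral_symm]
    rw [h2, abs_neg, abs_of_nonpos h, abs_of_nonneg]
    exact intervalIntegral.integral_nonneg (by linarith) (fun _ _ => abs_nonneg _)

lemma aux_cs (R : ℝ) (f g h F G : ℝ → ℝ)
    (hg : AEMeasurable g (volume.restrict (Set.Ioo 0 R)))
    (hh : AEMeasurable h (volume.restrict (Set.Ioo 0 R)))
    (g0 : ∀ s ∈ Set.Ioo 0 R, 0 ≤ g s) (h0 : ∀ s ∈ Set.Ioo 0 R, 0 ≤ h s)
    (hf : ∀ s ∈ Set.Ioo 0 R, f s = g s * h s)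
    (hF : ∀ s ∈ Set.Ioo 0 R, F s = g s ^ 2)
    (hG : ∀ s ∈ Set.Ioo 0 R, G s = h s ^ 2) :
    (∫⁻ s in Set.Ioo 0 R, ENNReal.ofReal (f s)) ≤
      (∫⁻ s in Set.Ioo 0 R, ENNReal.ofReal (F s)) ^ (1/2 : ℝ) *
      (∫⁻ s in Set.Ioo 0 R, ENNReal.ofReal (G s)) ^ (1/2 : ℝ) := by
  have key := ENNReal.lintegral_mul_le_Lp_mul_Lq (volume.restrict (Set.Ioo 0 R))
    Real.HolderConjugate.two_two hg.ennreal_ofReal hh.ennreal_ofReal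
  have e1 : (∫⁻ s in Set.Ioo 0 R, ENNReal.ofReal (f s)) =
      ∫⁻ s in Set.Ioo 0 R, ((fun s => ENNReal.ofReal (g s)) * fun s => ENNReal.ofReal (h s)) s := by
    refine setLIntegral_congr_fun measurableSet_Ioo (fun s hs => ?_)
    simp only [Pi.mul_apply]
    rw [hf s hs, ENNReal.ofReal_mul (g0 s hs)]
  have e2 : (∫⁻ s in Set.Ioo 0 R, ENNReal.ofReal (F s)) =
      ∫⁻ s in Set.Ioo 0 R, ENNReal.ofReal (g s) ^ (2 : ℝ) := by
    refine setLIntegral_congr_fun measurableSet_Ioo (fun s hs => ?_)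
    simp only [hF s hs]
    rw [ENNReal.ofReal_pow (g0 s hs), ← ENNReal.rpow_natCast]
    norm_num
  have e3 : (∫⁻ s in Set.Ioo 0 R, ENNReal.ofReal (G s)) =
      ∫⁻ s in Set.Ioo 0 R, ENNReal.ofReal (h s) ^ (2 : ℝ) := by
    refine setLIntegral_congr_fun measurableSet_Ioo (fun s hs => ?_)
    simp only [hG s hs]
    rw [ENNReal.ofReal_pow (h0 s hs), ← ENNReal.rpow_natCast]
    norm_num
  rw [e1, e2, e3]
  exact key

/-- The fundamental-theorem-of-calculus / Cauchy–Schwarz estimates for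
`I(w) = ∫₀^w |sin z| dz` applied to an equivariant configuration `u`. -/
theorem stmt_2 (u : ℝ → ℝ) (k : ℤ) (R : ℝ) (hR : 0 < R)
    (hu_cont : ContinuousOn u (Set.Ici 0))
    (hu_diff : ContDiffOn ℝ 1 u (Set.Ioi 0))
    (hu0 : u 0 = (k : ℝ) * Real.pi)
    (hint : IntegrableOn (fun s => |Real.sin (u s)| * |deriv u s|) (Set.Ioo 0 R))
    (I : ℝ → ℝ) (hI : ∀ w, I w = ∫ z in (0 : ℝ)..w, |Real.sin z|) :
    I |u R - u 0| ≤ (∫ s in Set.Ioo (0 : ℝ) R, |Real.sin (u s)| * |deriv u s|) ∧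
    ENNReal.ofReal (I |u R - u 0|) ≤
      (∫⁻ s in Set.Ioo (0 : ℝ) R, ENNReal.ofReal (Real.sin (u s) ^ 2 / s ^ 2 * s)) ^ (1/2 : ℝ) *
        (∫⁻ s in Set.Ioo (0 : ℝ) R, ENNReal.ofReal ((deriv u s) ^ 2 * s)) ^ (1/2 : ℝ) ∧
    ENNReal.ofReal (I |u R - u 0|) ≤
      (∫⁻ s in Set.Ioo (0 : ℝ) R,
          ENNReal.ofReal (Real.sin (u s) ^ 2 * (deriv u s) ^ 2 / s ^ 2 * s)) ^ (1/2 : ℝ) *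
        ENNReal.ofReal (R ^ 2 / 2) ^ (1/2 : ℝ) := by
  have hd : ∀ s ∈ Set.Ioo 0 R, HasDerivAt u (deriv u s) s := fun s hs =>
    ((hu_diff.differentiableOn one_ne_zero).differentiableAt (Ioi_mem_nhds hs.1)).hasDerivAt
  have hcs : Continuous (fun z : ℝ => |Real.sin z|) := Real.continuous_sin.abs
  have hum : AEMeasurable u (volume.restrict (Set.Ioo 0 R)) :=
    (hu_cont.mono (fun s hs => hs.1.le)).aemeasurable measurableSet_Ioo
  have hsm : AEMeasurable (fun s => |Real.sin (u s)|) (volume.restrict (Set.Ioo 0 R)) :=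
    hcs.measurable.comp_aemeasurable hum
  have hdm : Measurable (deriv u) := measurable_deriv u
  have hdm' : AEMeasurable (fun s => |deriv u s|) (volume.restrict (Set.Ioo 0 R)) :=
    (continuous_abs.measurable.comp hdm).aemeasurable
  have hint2 : IntegrableOn (fun s => |Real.sin (u s)| * deriv u s) (Set.Ioo 0 R) := by
    refine Integrable.mono' hint (hsm.mul hdm.aemeasurable).aestronglyMeasurable ?_
    refine Filter.Eventually.of_forall (fun s => ?_)
    simp [abs_mul]
  have hii : IntervalIntegrable (fun s => |Real.sin (u s)| * deriv u s) volume 0 R := by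
    rw [intervalIntegrable_iff_integrableOn_Ioo_of_le hR.le]
    exact hint2
  have hder : ∀ w, HasDerivAt (fun w => ∫ z in (u 0)..w, |Real.sin z|) |Real.sin w| w := fun w =>
    intervalIntegral.integral_hasDerivAt_right (hcs.intervalIntegrable _ _)
      (hcs.stronglyMeasurableAtFilter _ _) hcs.continuousAt
  have hftc := intervalIntegral.integral_eq_sub_of_hasDerivAt_of_le hR.le
    (f := fun s => ∫ z in (u 0)..(u s), |Real.sin z|)
    (f' := fun s => |Real.sin (u s)| * deriv u s)
    ((continuous_iff_continuousAt.2 fun w => (hder w).continuousAt).comp_continuousOn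
      (hu_cont.mono (fun s hs => hs.1)))
    (fun s hs => (hder (u s)).comp s (hd s hs)) hii
  simp only [intervalIntegral.integral_same, sub_zero] at hftc
  have h1 : I |u R - u 0| ≤ (∫ s in Set.Ioo (0 : ℝ) R, |Real.sin (u s)| * |deriv u s|) := by
    rw [hI, aux_abs _ _ k hu0, ← hftc, intervalIntegral.integral_of_le hR.le,
      integral_Ioc_eq_integral_Ioo]
    refine (abs_integral_le_integral_abs).trans (le_of_eq ?_)
    simp [abs_mul]
  have h2 : ENNReal.ofReal (I |u R - u 0|) ≤
      ∫⁻ s in Set.Ioo (0 : ℝ) R, ENNReal.ofReal (|Real.sin (u s)| * |deriv u s|) := by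
    rw [← ofReal_integral_eq_lintegral_ofReal hint
      (Filter.Eventually.of_forall fun s => by positivity)]
    exact ENNReal.ofReal_le_ofReal h1
  have hsq : AEMeasurable (fun s : ℝ => √s) (volume.restrict (Set.Ioo 0 R)) :=
    Real.continuous_sqrt.measurable.aemeasurable
  refine ⟨h1, h2.trans ?_, h2.trans ?_⟩
  · refine aux_cs R _ (fun s => |Real.sin (u s)| / √s) (fun s => |deriv u s| * √s) _ _
      (hsm.div hsq) (hdm'.mul hsq) (fun s _ => by positivity) (fun s _ => by positivity) ?_ ?_ ?_
    · intro s hs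
      have := Real.sqrt_pos.2 hs.1
      field_simp
    · intro s hs
      have := hs.1
      simp only [div_pow, sq_abs, Real.sq_sqrt hs.1.le]
      field_simp
    · intro s hs
      simp only [mul_pow, sq_abs, Real.sq_sqrt hs.1.le]
  · have hR2 : ENNReal.ofReal (R ^ 2 / 2) = ∫⁻ s in Set.Ioo (0 : ℝ) R, ENNReal.ofReal s := by
      have hid : IntegrableOn (fun s : ℝ => s) (Set.Ioo 0 R) :=
        (continuous_id.integrableOn_Icc (a := 0) (b := R)).mono_set Set.Ioo_subset_Icc_self
      rw [← ofReal_integral_eq_lintegral_ofReal hid]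
      · rw [← integral_Ioc_eq_integral_Ioo, ← intervalIntegral.integral_of_le hR.le, integral_id]
        simp
      · filter_upwards [ae_restrict_mem measurableSet_Ioo] with s hs using hs.1.le
    rw [hR2]
    refine aux_cs R _ (fun s => |Real.sin (u s)| * |deriv u s| / √s) (fun s => √s) _ _
      ((hsm.mul hdm').div hsq) hsq (fun s _ => by positivity) (fun s _ => by positivity) ?_ ?_ ?_
    · intro s hs
      have := Real.sqrt_pos.2 hs.1
      field_simp
    · intro s hs
      have := hs.1
      simp only [div_pow, mul_pow, sq_abs, Real.sq_sqrt hs.1.le]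
      field_simp
    · intro s hs
      simp only [Real.sq_sqrt hs.1.le]
end

section
/- For every r > 0 and every w ∈ ℝ, setting A = 1 + sin²(w)/r², the following identity holds: (1/2)·A^{−1/2}·(2cos(2w)/r² + 4sin²(w)/r⁴) − (1/4)·A^{−3/2}·(sin²(2w)/r⁴ + 4sin⁴(w)/r⁶) = A^{1/2}/r² − A^{1/2} + A^{−3/2}. (Here 2cos(2w)/r² + 4sin²(w)/r⁴ = ∂_w²A + ∂_r²A + (∂_r A)/r and sin²(2w)/r⁴ + 4sin⁴(w)/r⁶ = (∂_w A)² + (∂_r A)², so this is the integrand identity underlying the wave equation satisfied by Φ₁.) -/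
/-- The integrand identity underlying the wave equation satisfied by `Φ₁`:
for `r > 0`, `w ∈ ℝ` and `A = 1 + sin²w / r²`,
`½ A^{-1/2}(2cos 2w/r² + 4sin²w/r⁴) - ¼ A^{-3/2}(sin²2w/r⁴ + 4sin⁴w/r⁶)
  = A^{1/2}/r² - A^{1/2} + A^{-3/2}`. -/
theorem stmt_5 (r w A : ℝ) (hr : 0 < r) (hA : A = 1 + Real.sin w ^ 2 / r ^ 2) :
    (1 / 2) * A ^ (-(1 / 2) : ℝ) *
        (2 * Real.cos (2 * w) / r ^ 2 + 4 * Real.sin w ^ 2 / r ^ 4)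
      - (1 / 4) * A ^ (-(3 / 2) : ℝ) *
        (Real.sin (2 * w) ^ 2 / r ^ 4 + 4 * Real.sin w ^ 4 / r ^ 6)
    = A ^ ((1 / 2) : ℝ) / r ^ 2 - A ^ ((1 / 2) : ℝ) + A ^ (-(3 / 2) : ℝ) := by
  have hA0 : 0 < A := by rw [hA]; positivity
  have h1 : A ^ (-(1 / 2) : ℝ) = A ^ (-(3 / 2) : ℝ) * A := by
    rw [← Real.rpow_add_one hA0.ne']; norm_num
  have h2 : A ^ ((1 / 2) : ℝ) = A ^ (-(3 / 2) : ℝ) * A * A := by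
    rw [← h1, ← Real.rpow_add_one hA0.ne']; norm_num
  rw [h1, h2]
  generalize A ^ (-(3 / 2) : ℝ) = B
  have hc : Real.cos w ^ 2 = 1 - Real.sin w ^ 2 := Real.cos_sq' w
  have hd : Real.cos (2 * w) = 1 - 2 * Real.sin w ^ 2 := by
    rw [Real.cos_two_mul, hc]; ring
  have he : Real.sin (2 * w) ^ 2 = 4 * Real.sin w ^ 2 * (1 - Real.sin w ^ 2) := by
    rw [Real.sin_two_mul, ← hc]; ring
  rw [hd, he, hA]
  field_simp
  ring
end

section
/- Let Ω ⊆ ℝ × (0,∞) be open, let N₁ be an integer, and let u : ℝ × ℝ → ℝ be twice continuously differentiable on Ω and satisfy the (2+1)-dimensional equivariant Faddeev equation at every point of Ω. Define Φ₁(t,r) = ∫_{N₁π}^{u(t,r)} (1 + sin²(w)/r²)^{1/2} dw. Then at every point of Ω, ∂_t²Φ₁ − ∂_r²Φ₁ − (1/r)∂_rΦ₁ = −Φ₁/r² + ∫_{N₁π}^{u(t,r)} [A^{1/2} − A^{−3/2}] dw, where A = A(r,w) = 1 + sin²(w)/r². -/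
open Set Filter Topology

lemma slices (Ω : Set (ℝ × ℝ)) (hΩ : IsOpen Ω) (u : ℝ × ℝ → ℝ) (hu : DifferentiableOn ℝ u Ω) (q : ℝ × ℝ)
    (hq : q ∈ Ω) :
    HasDerivAt (fun t => u (t, q.2)) (fderiv ℝ u q (1, 0)) q.1 ∧
    HasDerivAt (fun r => u (q.1, r)) (fderiv ℝ u q (0, 1)) q.2 := by
  have h : HasFDerivAt u (fderiv ℝ u q) (q.1, q.2) :=
    (hu.differentiableAt (hΩ.mem_nhds hq)).hasFDerivAt
  constructor
  · exact h.comp_hasDerivAt (f := fun t => (t, q.2)) q.1 ((hasDerivAt_id q.1).prodMk (hasDerivAt_const q.1 q.2))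
  · exact h.comp_hasDerivAt (f := fun t => (q.1, t)) q.2 ((hasDerivAt_const q.2 q.1).prodMk (hasDerivAt_id q.2))

lemma slice_nhds (Ω : Set (ℝ × ℝ)) (hΩ : IsOpen Ω) (q : ℝ × ℝ) (hq : q ∈ Ω) :
    (∀ᶠ t in 𝓝 q.1, (t, q.2) ∈ Ω) ∧ (∀ᶠ r in 𝓝 q.2, (q.1, r) ∈ Ω) := by
  constructor
  · have : ContinuousAt (fun t : ℝ => (t, q.2)) q.1 := by fun_prop
    exact this (hΩ.mem_nhds hq)
  · have : ContinuousAt (fun t : ℝ => (q.1, t)) q.2 := by fun_prop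
    exact this (hΩ.mem_nhds hq)

lemma leib (f f' : ℝ → ℝ → ℝ) (a r0 : ℝ) (h0 : 0 < r0) (v : ℝ → ℝ) (v' : ℝ)
    (hf : ContinuousOn (fun p : ℝ × ℝ => f p.1 p.2) (Ioi 0 ×ˢ univ))
    (hf' : ContinuousOn (fun p : ℝ × ℝ => f' p.1 p.2) (Ioi 0 ×ˢ univ))
    (hd : ∀ r, 0 < r → ∀ w, HasDerivAt (fun r => f r w) (f' r w) r)
    (hv : HasDerivAt v v' r0) :
    HasDerivAt (fun r => ∫ w in a..v r, f r w)
      (f r0 (v r0) * v' + ∫ w in a..v r0, f' r0 w) r0 := by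
  have cf : ∀ r, 0 < r → Continuous (f r) := fun r hr => by
    rw [← continuousOn_univ]
    exact hf.comp (f := fun w : ℝ => (r, w)) (by fun_prop) (fun w _ => ⟨hr, mem_univ _⟩)
  have cf' : ∀ r, 0 < r → Continuous (f' r) := fun r hr => by
    rw [← continuousOn_univ]
    exact hf'.comp (f := fun w : ℝ => (r, w)) (by fun_prop) (fun w _ => ⟨hr, mem_univ _⟩)
  have hpos : ∀ᶠ r in 𝓝 r0, 0 < r := lt_mem_nhds h0
  -- fixed endpoint
  have h1 : HasDerivAt (fun r => ∫ w in a..v r0, f r w) (∫ w in a..v r0, f' r0 w) r0 := by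
    have hK : IsCompact (Icc (r0/2) (2*r0) ×ˢ uIcc a (v r0)) := isCompact_Icc.prod isCompact_uIcc
    obtain ⟨C, hC⟩ := hK.exists_bound_of_continuousOn (hf'.mono (fun p hp => 
      ⟨(by have := hp.1.1; simp only [mem_Ioi]; linarith), mem_univ _⟩))
    refine (intervalIntegral.hasDerivAt_integral_of_dominated_loc_of_deriv_le
      (s := Icc (r0/2) (2*r0)) (bound := fun _ => C) (F' := f')
      (Icc_mem_nhds (by linarith) (by linarith)) ?_ ?_ ?_ ?_ ?_ ?_).2
    · filter_upwards [hpos] with r hr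
      exact (cf r hr).aestronglyMeasurable
    · exact (cf r0 h0).intervalIntegrable _ _
    · exact (cf' r0 h0).aestronglyMeasurable
    · refine Eventually.of_forall fun w hw r hr => ?_
      exact hC (r, w) ⟨hr, uIoc_subset_uIcc hw⟩
    · exact intervalIntegrable_const
    · refine Eventually.of_forall fun w hw r hr => hd r (by have := hr.1; linarith) w
  have h2 : HasDerivAt (fun r => ∫ w in v r0..v r, (f r w - f r0 (v r0))) 0 r0 := by
    rw [hasDerivAt_iff_isLittleO]
    have hO : (fun r => v r - v r0) =O[𝓝 r0] (fun r => r - r0) := hv.isBigO_sub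
    refine Asymptotics.IsLittleO.trans_isBigO ?_ hO
    rw [Asymptotics.isLittleO_iff]
    intro c hc
    have hcont : ContinuousAt (fun p : ℝ × ℝ => f p.1 p.2) (r0, v r0) :=
      hf.continuousAt ((isOpen_Ioi.prod isOpen_univ).mem_nhds ⟨h0, mem_univ _⟩)
    obtain ⟨δ, hδ, hb⟩ := Metric.continuousAt_iff.1 hcont c hc
    have hvc := Metric.continuousAt_iff.1 hv.continuousAt δ hδ
    obtain ⟨ε, hε, hvb⟩ := hvc
    filter_upwards [Metric.ball_mem_nhds r0 hε, Metric.ball_mem_nhds r0 hδ] with r hr1 hr2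
    simp only [intervalIntegral.integral_same, sub_zero, smul_zero]
    rw [Real.norm_eq_abs (v r - v r0)]
    refine intervalIntegral.norm_integral_le_of_norm_le_const fun w hw => ?_
    have hvr := hvb hr1
    have := @hb (r, w) ?_
    · simpa [dist_eq_norm] using this.le
    · rw [Prod.dist_eq]
      refine max_lt hr2 ?_
      have := abs_sub_left_of_mem_uIcc (uIoc_subset_uIcc hw)
      simp only [Real.dist_eq] at hvr ⊢
      linarith
  have h3 : HasDerivAt (fun r => (v r - v r0) * f r0 (v r0)) (v' * f r0 (v r0)) r0 :=
    (hv.sub_const _).mul_const _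
  have := (h1.add h2).add h3
  refine (this.congr_of_eventuallyEq ?_).congr_deriv (by ring)
  filter_upwards [hpos] with r hr
  have c := cf r hr
  simp only [Pi.add_apply]
  rw [intervalIntegral.integral_sub (c.intervalIntegrable _ _) intervalIntegrable_const,
    intervalIntegral.integral_const, ← intervalIntegral.integral_add_adjacent_intervals
    (c.intervalIntegrable a (v r0)) (c.intervalIntegrable _ _), smul_eq_mul]
  ring

noncomputable abbrev B (r w : ℝ) : ℝ := Real.sqrt (1 + Real.sin w ^ 2 / r ^ 2)
noncomputable abbrev Br (r w : ℝ) : ℝ := -(Real.sin w ^ 2 / r ^ 3) / B r w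
noncomputable abbrev Bw (r w : ℝ) : ℝ := (Real.sin w * Real.cos w / r ^ 2) / B r w
noncomputable abbrev Brr (r w : ℝ) : ℝ :=
  (3 * Real.sin w ^ 2 / r ^ 4) / B r w - (Real.sin w ^ 2 / r ^ 3) ^ 2 / B r w ^ 3
noncomputable abbrev Bww (r w : ℝ) : ℝ :=
  ((Real.cos w ^ 2 - Real.sin w ^ 2) / r ^ 2) / B r w
    - (Real.sin w * Real.cos w / r ^ 2) ^ 2 / B r w ^ 3

lemma A_pos (r w : ℝ) : 0 < 1 + Real.sin w ^ 2 / r ^ 2 := by positivity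
lemma B_pos (r w : ℝ) : 0 < B r w := Real.sqrt_pos.2 (A_pos r w)
lemma B_sq (r w : ℝ) : B r w ^ 2 = 1 + Real.sin w ^ 2 / r ^ 2 := Real.sq_sqrt (A_pos r w).le

lemma cont_B : ContinuousOn (fun p : ℝ × ℝ => B p.1 p.2) (Ioi 0 ×ˢ univ) := by
  unfold B
  refine ContinuousOn.sqrt (ContinuousOn.add continuousOn_const (ContinuousOn.div (by fun_prop) (by fun_prop) ?_))
  rintro p ⟨hp, -⟩
  exact pow_ne_zero _ (ne_of_gt hp)

lemma cont_Br : ContinuousOn (fun p : ℝ × ℝ => Br p.1 p.2) (Ioi 0 ×ˢ univ) := by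
  unfold Br
  refine ContinuousOn.div (ContinuousOn.neg (ContinuousOn.div (by fun_prop) (by fun_prop) ?_)) cont_B
    (fun p _ => (B_pos _ _).ne')
  rintro p ⟨hp, -⟩
  exact pow_ne_zero _ (ne_of_gt hp)

lemma cont_Brr : ContinuousOn (fun p : ℝ × ℝ => Brr p.1 p.2) (Ioi 0 ×ˢ univ) := by
  unfold Brr
  refine ContinuousOn.sub (ContinuousOn.div (ContinuousOn.div (by fun_prop) (by fun_prop) ?_) cont_B
    (fun p _ => (B_pos _ _).ne')) (ContinuousOn.div (ContinuousOn.pow (ContinuousOn.div (by fun_prop) (by fun_prop) ?_) 2) (cont_B.pow 3)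
    (fun p _ => pow_ne_zero _ (B_pos _ _).ne'))
  all_goals
    rintro p ⟨hp, -⟩
    exact pow_ne_zero _ (ne_of_gt hp)

lemma cont_Bs (r : ℝ) : Continuous (B r) := by unfold B; fun_prop

lemma dBr (r : ℝ) (hr : 0 < r) (w : ℝ) : HasDerivAt (fun r => B r w) (Br r w) r := by
  have h : HasDerivAt (fun r : ℝ => 1 + Real.sin w ^ 2 / r ^ 2) (-2 * Real.sin w ^ 2 / r ^ 3) r := by
    have := ((hasDerivAt_const r (Real.sin w ^ 2)).div (hasDerivAt_pow 2 r) (by positivity)).const_add 1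
    refine this.congr_deriv ?_
    field_simp
    ring
  refine (h.sqrt (A_pos r w).ne').congr_deriv ?_
  have := B_pos r w
  change _ / (2 * B r w) = _
  unfold Br
  generalize B r w = b at *
  field_simp

lemma dBw (r : ℝ) (hr : 0 < r) (w : ℝ) : HasDerivAt (fun w => B r w) (Bw r w) w := by
  have h : HasDerivAt (fun w : ℝ => 1 + Real.sin w ^ 2 / r ^ 2) (2 * Real.sin w * Real.cos w / r ^ 2) w := by
    have := (((Real.hasDerivAt_sin w).pow 2).div_const (r ^ 2)).const_add 1
    refine this.congr_deriv ?_
    norm_num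
  refine (h.sqrt (A_pos r w).ne').congr_deriv ?_
  have := B_pos r w
  change _ / (2 * B r w) = _
  unfold Bw
  generalize B r w = b at *
  field_simp

lemma dBrr (r : ℝ) (hr : 0 < r) (w : ℝ) : HasDerivAt (fun r => Br r w) (Brr r w) r := by
  have h : HasDerivAt (fun r : ℝ => -(Real.sin w ^ 2 / r ^ 3)) (3 * Real.sin w ^ 2 / r ^ 4) r := by
    have := ((hasDerivAt_const r (Real.sin w ^ 2)).div (hasDerivAt_pow 3 r) (by positivity)).neg
    refine this.congr_deriv ?_
    field_simp
    ring
  refine (h.div (dBr r hr w) (B_pos r w).ne').congr_deriv ?_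
  have := B_pos r w
  unfold Brr Br
  generalize B r w = b at *
  field_simp

lemma dBww (r : ℝ) (hr : 0 < r) (w : ℝ) : HasDerivAt (fun w => Bw r w) (Bww r w) w := by
  have h : HasDerivAt (fun w : ℝ => Real.sin w * Real.cos w / r ^ 2)
      ((Real.cos w ^ 2 - Real.sin w ^ 2) / r ^ 2) w := by
    have := ((Real.hasDerivAt_sin w).mul (Real.hasDerivAt_cos w)).div_const (r ^ 2)
    refine this.congr_deriv ?_
    ring
  refine (h.div (dBw r hr w) (B_pos r w).ne').congr_deriv ?_
  have := B_pos r w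
  unfold Bww Bw
  generalize B r w = b at *
  field_simp

lemma key (r : ℝ) (hr : 0 < r) (w : ℝ) :
    Bww r w + Brr r w + Br r w / r = B r w / r ^ 2 - (B r w - (B r w ^ 3)⁻¹) := by
  have hb := B_pos r w
  have h2 := B_sq r w
  have hc : Real.cos w ^ 2 = 1 - Real.sin w ^ 2 := Real.cos_sq' w
  unfold Bww Brr Br
  generalize B r w = b at *
  have hs : Real.sin w ^ 2 = (b ^ 2 - 1) * r ^ 2 := by rw [h2]; field_simp; ring
  rw [div_pow, mul_pow, div_pow, hc, hs]
  field_simp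
  ring

lemma cont_Bww (r : ℝ) : Continuous (Bww r) := by
  unfold Bww
  have := cont_Bs r
  refine Continuous.sub (Continuous.div (by fun_prop) this (fun w => (B_pos r w).ne')) (Continuous.div (by fun_prop) (this.pow 3) (fun w => pow_ne_zero _ (B_pos r w).ne'))

lemma slice_cont {f : ℝ → ℝ → ℝ} (hf : ContinuousOn (fun p : ℝ × ℝ => f p.1 p.2) (Ioi 0 ×ˢ univ))
    (r : ℝ) (hr : 0 < r) : Continuous (f r) := by
  rw [← continuousOn_univ]
  exact hf.comp (f := fun w : ℝ => (r, w)) (by fun_prop) (fun w _ => ⟨hr, mem_univ _⟩)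

lemma int_key (N : ℤ) (r y : ℝ) (hr : 0 < r) :
    - Bw r y - (∫ w in (N * Real.pi)..y, Brr r w) - (∫ w in (N * Real.pi)..y, Br r w) / r
    = -(∫ w in (N * Real.pi)..y, B r w) / r ^ 2 + ∫ w in (N * Real.pi)..y,
        ((1 + Real.sin w ^ 2 / r ^ 2) ^ ((1 / 2) : ℝ)
              - (1 + Real.sin w ^ 2 / r ^ 2) ^ (-(3 / 2) : ℝ)) := by
  have e : ∀ w, ((1 + Real.sin w ^ 2 / r ^ 2) ^ ((1 / 2) : ℝ)
              - (1 + Real.sin w ^ 2 / r ^ 2) ^ (-(3 / 2) : ℝ)) =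
      B r w / r ^ 2 - (Bww r w + Brr r w + Br r w / r) := fun w => by
    rw [key r hr w, ← Real.sqrt_eq_rpow, Real.rpow_neg (A_pos r w).le]
    have : (1 + Real.sin w ^ 2 / r ^ 2) ^ ((3 / 2) : ℝ) = B r w ^ 3 := by
      unfold B
      rw [Real.sqrt_eq_rpow, ← Real.rpow_natCast _ 3, ← Real.rpow_mul (A_pos r w).le]
      norm_num
    rw [this]; ring
  simp only [e]
  have c1 := cont_Bs r
  have c2 := slice_cont cont_Br r hr
  have c3 := slice_cont cont_Brr r hr
  have c4 := cont_Bww r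
  have hw : ∫ w in (N * Real.pi)..y, Bww r w = Bw r y := by
    rw [intervalIntegral.integral_eq_sub_of_hasDerivAt (fun w _ => dBww r hr w) (c4.intervalIntegrable _ _)]
    simp [Bw, Real.sin_int_mul_pi]
  have i1 := c1.intervalIntegrable (μ := MeasureTheory.volume) (N * Real.pi) y
  have i2 := c2.intervalIntegrable (μ := MeasureTheory.volume) (N * Real.pi) y
  have i3 := c3.intervalIntegrable (μ := MeasureTheory.volume) (N * Real.pi) y
  have i4 := c4.intervalIntegrable (μ := MeasureTheory.volume) (N * Real.pi) y
  rw [intervalIntegral.integral_sub (i1.div_const _) ((i4.add i3).add (i2.div_const _)),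
    intervalIntegral.integral_add (i4.add i3) (i2.div_const _), intervalIntegral.integral_add i4 i3,
    intervalIntegral.integral_div, intervalIntegral.integral_div, hw]
  ring

theorem stmt_6
    (Ω : Set (ℝ × ℝ)) (hΩopen : IsOpen Ω) (hΩpos : ∀ q ∈ Ω, 0 < q.2)
    (N₁ : ℤ)
    (u ut ur utt urr : ℝ × ℝ → ℝ)
    (hu : ContDiffOn ℝ 2 u Ω)
    (hut : ∀ q : ℝ × ℝ, ut q = deriv (fun t => u (t, q.2)) q.1)
    (hur : ∀ q : ℝ × ℝ, ur q = deriv (fun r => u (q.1, r)) q.2)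
    (hutt : ∀ q : ℝ × ℝ, utt q = deriv (fun t => ut (t, q.2)) q.1)
    (hurr : ∀ q : ℝ × ℝ, urr q = deriv (fun r => ur (q.1, r)) q.2)
    (heq : ∀ q ∈ Ω,
      (1 + Real.sin (u q) ^ 2 / q.2 ^ 2) * (utt q - urr q)
        - (1 - Real.sin (u q) ^ 2 / q.2 ^ 2) * ur q / q.2
        + Real.sin (2 * u q) / (2 * q.2 ^ 2) * (1 + ut q ^ 2 - ur q ^ 2) = 0)
    (Φ₁ : ℝ × ℝ → ℝ)
    (hΦ₁ : ∀ q : ℝ × ℝ, Φ₁ q =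
      ∫ w in ((N₁ : ℝ) * Real.pi)..(u q), Real.sqrt (1 + Real.sin w ^ 2 / q.2 ^ 2)) :
    ∀ q ∈ Ω,
      deriv (fun t => deriv (fun s => Φ₁ (s, q.2)) t) q.1
        - deriv (fun r => deriv (fun s => Φ₁ (q.1, s)) r) q.2
        - (1 / q.2) * deriv (fun r => Φ₁ (q.1, r)) q.2
      = -Φ₁ q / q.2 ^ 2
        + ∫ w in ((N₁ : ℝ) * Real.pi)..(u q),
            ((1 + Real.sin w ^ 2 / q.2 ^ 2) ^ ((1 / 2) : ℝ)
              - (1 + Real.sin w ^ 2 / q.2 ^ 2) ^ (-(3 / 2) : ℝ)) := by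

  have hu1 : DifferentiableOn ℝ u Ω := hu.differentiableOn (by norm_num)
  have hf1 : DifferentiableOn ℝ (fderiv ℝ u) Ω :=
    (hu.fderiv_of_isOpen (m := 1) hΩopen (by norm_num)).differentiableOn (by norm_num)
  have et : ∀ q ∈ Ω, ut q = fderiv ℝ u q (1, 0) := fun q hq => by
    rw [hut]; exact (slices Ω hΩopen u hu1 q hq).1.deriv
  have er : ∀ q ∈ Ω, ur q = fderiv ℝ u q (0, 1) := fun q hq => by
    rw [hur]; exact (slices Ω hΩopen u hu1 q hq).2.deriv
  have dt : ∀ q ∈ Ω, HasDerivAt (fun t => u (t, q.2)) (ut q) q.1 := fun q hq => by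
    rw [et q hq]; exact (slices Ω hΩopen u hu1 q hq).1
  have dr : ∀ q ∈ Ω, HasDerivAt (fun r => u (q.1, r)) (ur q) q.2 := fun q hq => by
    rw [er q hq]; exact (slices Ω hΩopen u hu1 q hq).2
  have dut : DifferentiableOn ℝ ut Ω :=
    (hf1.clm_apply (differentiableOn_const _)).congr et
  have dur : DifferentiableOn ℝ ur Ω :=
    (hf1.clm_apply (differentiableOn_const _)).congr er
  have dtt : ∀ q ∈ Ω, HasDerivAt (fun t => ut (t, q.2)) (utt q) q.1 := fun q hq => by
    rw [hutt]; exact (slices Ω hΩopen ut dut q hq).1.differentiableAt.hasDerivAt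
  have drr : ∀ q ∈ Ω, HasDerivAt (fun r => ur (q.1, r)) (urr q) q.2 := fun q hq => by
    rw [hurr]; exact (slices Ω hΩopen ur dur q hq).2.differentiableAt.hasDerivAt
  have hΦ : ∀ q, Φ₁ q = ∫ w in ((N₁ : ℝ) * Real.pi)..(u q), B q.2 w := hΦ₁
  have pt : ∀ q ∈ Ω, HasDerivAt (fun s => Φ₁ (s, q.2)) (B q.2 (u q) * ut q) q.1 := fun q hq => by
    simp only [hΦ]
    have := ((cont_Bs q.2).integral_hasStrictDerivAt ((N₁ : ℝ) * Real.pi) (u q)).hasDerivAt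
    exact this.comp (h := fun s => u (s, q.2)) q.1 (dt q hq)
  have pr : ∀ q ∈ Ω, HasDerivAt (fun s => Φ₁ (q.1, s))
      (B q.2 (u q) * ur q + ∫ w in ((N₁ : ℝ) * Real.pi)..(u q), Br q.2 w) q.2 := fun q hq => by
    simp only [hΦ]
    exact leib B Br _ q.2 (hΩpos q hq) (fun s => u (q.1, s)) _ cont_B cont_Br dBr (dr q hq)
  intro q hq
  have hr := hΩpos q hq
  have ptt : HasDerivAt (fun t => deriv (fun s => Φ₁ (s, q.2)) t)
      (Bw q.2 (u q) * ut q * ut q + B q.2 (u q) * utt q) q.1 := by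
    have h1 : HasDerivAt (fun t => B q.2 (u (t, q.2))) (Bw q.2 (u q) * ut q) q.1 :=
      (dBw q.2 hr (u q)).comp (h := fun s => u (s, q.2)) q.1 (dt q hq)
    refine (h1.mul (dtt q hq)).congr_of_eventuallyEq ?_
    filter_upwards [(slice_nhds Ω hΩopen q hq).1] with t ht
    exact (pt _ ht).deriv
  have prr : HasDerivAt (fun r => deriv (fun s => Φ₁ (q.1, s)) r)
      ((Bw q.2 (u q) * ur q + Br q.2 (u q)) * ur q + B q.2 (u q) * urr q +
        (Br q.2 (u q) * ur q + ∫ w in ((N₁ : ℝ) * Real.pi)..(u q), Brr q.2 w)) q.2 := by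
    have h1 : HasDerivAt (fun r => B r (u (q.1, r))) (Bw q.2 (u q) * ur q + Br q.2 (u q)) q.2 := by
      have hh : HasDerivAt (fun r => 1 + Real.sin (u (q.1, r)) ^ 2 / r ^ 2)
          ((2 * Real.sin (u q) * (Real.cos (u q) * ur q)) / q.2 ^ 2 -
            2 * Real.sin (u q) ^ 2 / q.2 ^ 3) q.2 := by
        have := ((((dr q hq).sin).pow 2).div (hasDerivAt_pow 2 q.2) (by positivity)).const_add 1
        refine this.congr_deriv ?_
        simp only [Prod.mk.eta, Pi.pow_apply]
        field_simp
        ring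
      refine (hh.sqrt (A_pos q.2 (u q)).ne').congr_deriv ?_
      have := B_pos q.2 (u q)
      change _ / (2 * B q.2 (u q)) = _
      unfold Bw Br
      generalize B q.2 (u q) = b at *
      field_simp
      ring
    have h2 := leib Br Brr ((N₁ : ℝ) * Real.pi) q.2 hr (fun s => u (q.1, s)) _ cont_Br cont_Brr dBrr (dr q hq)
    refine ((h1.mul (drr q hq)).add h2).congr_of_eventuallyEq ?_
    filter_upwards [(slice_nhds Ω hΩopen q hq).2] with t ht
    exact (pr _ ht).deriv
  rw [ptt.deriv, prr.deriv, (pr q hq).deriv, hΦ, ← int_key N₁ q.2 (u q) hr]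
  generalize (∫ w in ((N₁ : ℝ) * Real.pi)..(u q), Brr q.2 w) = I1
  generalize (∫ w in ((N₁ : ℝ) * Real.pi)..(u q), Br q.2 w) = I2
  have h := heq q hq
  have hb := B_pos q.2 (u q)
  have h2 := B_sq q.2 (u q)
  rw [Real.sin_two_mul] at h
  unfold Bw Br
  generalize B q.2 (u q) = b at *
  generalize q.2 = r at *
  have hs : Real.sin (u q) ^ 2 = (b ^ 2 - 1) * r ^ 2 := by rw [h2]; field_simp; ring
  rw [hs] at h ⊢
  field_simp at h ⊢
  linear_combination h
end

section
/- There exist constants c > 0 and C > 0 such that for every r > 0 and every v ≥ 0 with r·v ≤ 1, writing Ã = Ã(r,y) = 1 + sin²(ry)/r², one has c·min(v², v³) ≤ ∫₀^v (Ã^{−1/2} + Ã^{−3/2})·(Ã − 1) dy ≤ C·min(v², v³). -/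
lemma aux_pt (A s y v : ℝ) (hA : A = 1 + s ^ 2) (h1 : y / 2 ≤ s) (h2 : s ≤ y) (hy : 0 ≤ y)
    (hv : y ≤ v) :
    1 / (4 * (1 + v)) * y ^ 2 ≤ (A ^ (-(1 / 2) : ℝ) + A ^ (-(3 / 2) : ℝ)) * (A - 1) ∧
    (A ^ (-(1 / 2) : ℝ) + A ^ (-(3 / 2) : ℝ)) * (A - 1) ≤ 2 * y ∧
    (A ^ (-(1 / 2) : ℝ) + A ^ (-(3 / 2) : ℝ)) * (A - 1) ≤ 2 * y ^ 2 := by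
  have hs : 0 ≤ s := by linarith
  have hA1 : 1 ≤ A := by nlinarith [sq_nonneg s]
  have hA0 : 0 ≤ A := by linarith
  have e1 : A ^ (-(1 / 2) : ℝ) = (Real.sqrt A)⁻¹ := by
    rw [Real.rpow_neg hA0, Real.sqrt_eq_rpow]
  have e2 : A ^ (-(3 / 2) : ℝ) ≤ A ^ (-(1 / 2) : ℝ) :=
    Real.rpow_le_rpow_of_exponent_le hA1 (by norm_num)
  have e3 : 0 ≤ A ^ (-(3 / 2) : ℝ) := Real.rpow_nonneg hA0 _
  rw [e1] at *
  set q := Real.sqrt A with hq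
  have hq1 : 1 ≤ q := Real.one_le_sqrt.mpr hA1
  have hqs : s ≤ q := Real.le_sqrt_of_sq_le (by linarith)
  have hqv : q ≤ 1 + v := by
    apply Real.sqrt_le_iff.mpr
    constructor
    · linarith
    · nlinarith
  have hq0 : 0 < q := by linarith
  have hAm : A - 1 = s ^ 2 := by linarith
  rw [hAm]
  have hs2 : 0 ≤ s ^ 2 := sq_nonneg s
  have up : (q⁻¹ + A ^ (-(3 / 2) : ℝ)) * s ^ 2 ≤ 2 * (q⁻¹ * s ^ 2) := by nlinarith
  refine ⟨?_, ?_, ?_⟩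
  · have l1 : (1 + v)⁻¹ ≤ q⁻¹ := inv_anti₀ hq0 hqv
    have l0 : 0 ≤ (1 + v)⁻¹ := by apply inv_nonneg.mpr; linarith
    have l2 : 1 / (4 * (1 + v)) * y ^ 2 = (1 + v)⁻¹ * (y / 2) ^ 2 := by
      have : 1 + v ≠ 0 := by linarith
      field_simp; ring
    rw [l2]
    have l3 : (y / 2) ^ 2 ≤ s ^ 2 := by nlinarith
    have l4 : (1 + v)⁻¹ * (y / 2) ^ 2 ≤ q⁻¹ * s ^ 2 := by
      apply mul_le_mul l1 l3 (sq_nonneg _) (by positivity)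
    nlinarith
  · have : q⁻¹ * s ^ 2 ≤ s := by
      rw [inv_mul_le_iff₀ hq0]; nlinarith
    linarith
  · have : q⁻¹ * s ^ 2 ≤ s ^ 2 := by
      rw [inv_mul_le_iff₀ hq0]; nlinarith
    nlinarith

lemma aux_sin (r v y : ℝ) (hr : 0 < r) (hrv : r * v ≤ 1) (hy : 0 ≤ y) (hyv : y ≤ v) :
    y / 2 ≤ Real.sin (r * y) / r ∧ Real.sin (r * y) / r ≤ y := by
  have h0 : 0 ≤ r * y := by positivity
  have h1 : r * y ≤ 1 := le_trans (by gcongr) hrv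
  have hpi := Real.pi_gt_three
  have hpi4 := Real.pi_le_four
  have h := Real.mul_le_sin h0 (by linarith)
  have h3 := Real.sin_le h0
  constructor
  · rw [le_div_iff₀ hr]
    have : (1 : ℝ) / 2 ≤ 2 / Real.pi := by
      rw [div_le_div_iff₀ (by norm_num) (by linarith)]; linarith
    nlinarith
  · rw [div_le_iff₀ hr]; linarith


/-- For `r > 0`, `v ≥ 0` with `r·v ≤ 1`, writing `Ã(r,y) = 1 + sin²(ry)/r²`, the quantity
`∫₀^v (Ã^{-1/2} + Ã^{-3/2})(Ã - 1) dy` is comparable to `min(v², v³)`,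
with absolute comparison constants. -/
theorem stmt_8 :
    ∃ c C : ℝ, 0 < c ∧ 0 < C ∧
      ∀ r v : ℝ, 0 < r → 0 ≤ v → r * v ≤ 1 →
        c * min (v ^ 2) (v ^ 3) ≤
            (∫ y in (0 : ℝ)..v,
              ((1 + Real.sin (r * y) ^ 2 / r ^ 2) ^ (-(1 / 2) : ℝ)
                  + (1 + Real.sin (r * y) ^ 2 / r ^ 2) ^ (-(3 / 2) : ℝ))
                * ((1 + Real.sin (r * y) ^ 2 / r ^ 2) - 1)) ∧
          (∫ y in (0 : ℝ)..v,
              ((1 + Real.sin (r * y) ^ 2 / r ^ 2) ^ (-(1 / 2) : ℝ)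
                  + (1 + Real.sin (r * y) ^ 2 / r ^ 2) ^ (-(3 / 2) : ℝ))
                * ((1 + Real.sin (r * y) ^ 2 / r ^ 2) - 1)) ≤
            C * min (v ^ 2) (v ^ 3) := by
  refine ⟨1 / 24, 1, by norm_num, by norm_num, ?_⟩
  intro r v hr hv hrv
  have key : ∀ y ∈ Set.Icc (0 : ℝ) v, _ := fun y hy =>
    aux_pt (1 + Real.sin (r * y) ^ 2 / r ^ 2) (Real.sin (r * y) / r) y v (by rw [div_pow])
      (aux_sin r v y hr hrv hy.1 hy.2).1 (aux_sin r v y hr hrv hy.1 hy.2).2 hy.1 hy.2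
  have hpos : ∀ y : ℝ, 1 + Real.sin (r * y) ^ 2 / r ^ 2 ≠ 0 := fun y => by positivity
  have hA : Continuous fun y : ℝ => 1 + Real.sin (r * y) ^ 2 / r ^ 2 := by fun_prop
  have hc : Continuous fun y : ℝ => ((1 + Real.sin (r * y) ^ 2 / r ^ 2) ^ (-(1 / 2) : ℝ)
                  + (1 + Real.sin (r * y) ^ 2 / r ^ 2) ^ (-(3 / 2) : ℝ))
                * ((1 + Real.sin (r * y) ^ 2 / r ^ 2) - 1) :=
    ((hA.rpow_const fun y => Or.inl (hpos y)).add
      (hA.rpow_const fun y => Or.inl (hpos y))).mul (hA.sub continuous_const)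
  have hi := hc.intervalIntegrable (μ := MeasureTheory.volume) 0 v
  have b1 := intervalIntegral.integral_mono_on hv
    ((by fun_prop : Continuous fun y : ℝ => 1 / (4 * (1 + v)) * y ^ 2).intervalIntegrable 0 v) hi
    (fun y hy => (key y hy).1)
  have b2 := intervalIntegral.integral_mono_on hv hi
    ((by fun_prop : Continuous fun y : ℝ => 2 * y).intervalIntegrable 0 v)
    (fun y hy => (key y hy).2.1)
  have b3 := intervalIntegral.integral_mono_on hv hi
    ((by fun_prop : Continuous fun y : ℝ => 2 * y ^ 2).intervalIntegrable 0 v)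
    (fun y hy => (key y hy).2.2)
  rw [intervalIntegral.integral_const_mul, integral_pow] at b1 b3
  rw [intervalIntegral.integral_const_mul, integral_id] at b2
  have hv3 : 0 ≤ v ^ 3 := by positivity
  constructor
  · refine le_trans ?_ b1
    have e : 1 / (4 * (1 + v)) * ((v ^ (2 + 1) - 0 ^ (2 + 1)) / ((2 : ℕ) + 1 : ℝ))
        = v ^ 3 / (12 * (1 + v)) := by
      push_cast
      field_simp
      ring
    rw [e, le_div_iff₀ (by positivity)]
    rcases le_total v 1 with h | h
    · have := min_le_right (v ^ 2) (v ^ 3)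
      nlinarith
    · have := min_le_left (v ^ 2) (v ^ 3)
      nlinarith [mul_le_mul_of_nonneg_right this (by linarith : 0 ≤ 1 + v),
        mul_nonneg (sq_nonneg v) (sub_nonneg.mpr h)]
  · rw [one_mul]
    apply le_min
    · refine b2.trans (le_of_eq ?_)
      ring
    · refine b3.trans ?_
      push_cast
      norm_num
      linarith
end

section
/- There exists a constant C > 0 such that for every r > 0 and every v ∈ ℝ, ∫₀^{|v|} |y·sin(2ry)/r² − 2·sin²(ry)/r³| dy ≤ C·r·|v|⁵. -/
theorem key_bound (x : ℝ) (hx : 0 ≤ x) :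
    |2 * Real.sin x * (x * Real.cos x - Real.sin x)| ≤ 4 * x ^ 4 := by
  have h1 : |Real.sin x| ≤ x := by
    have := Real.abs_sin_le_abs (x := x)
    rwa [abs_of_nonneg hx] at this
  have h2 : |x * Real.cos x - Real.sin x| ≤ 2 * x ^ 3 := by
    have hx3 : 0 ≤ x ^ 3 := by positivity
    have hs := Real.sin_le hx
    have hc := Real.one_sub_sq_div_two_le_cos (x := x)
    have hc1 := Real.cos_le_one x
    have m1 := mul_le_mul_of_nonneg_left hc hx
    have m2 := mul_le_mul_of_nonneg_left hc1 hx
    rw [abs_le]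
    constructor
    · nlinarith
    · rcases hx.eq_or_lt with h0 | h0
      · subst h0; simp
      rcases le_or_gt x 1 with h | h
      · have := Real.sin_gt_sub_cube h0
        nlinarith
      · have := Real.neg_one_le_sin x
        have : x ≤ x ^ 3 := by nlinarith [mul_pos h0 (sub_pos.2 h)]
        nlinarith
  rw [abs_mul, abs_mul, abs_two]
  calc 2 * |Real.sin x| * |x * Real.cos x - Real.sin x| ≤ 2 * x * (2 * x ^ 3) := by gcongr
    _ = 4 * x ^ 4 := by ring

/-- Integrated bound on `|∂ᵣ Ã|` for `Ã(r,y) = 1 + sin²(ry)/r²`: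
`∫₀^{|v|} |y·sin(2ry)/r² - 2·sin²(ry)/r³| dy ≤ C·r·|v|⁵` with an absolute constant `C`. -/
theorem stmt_13 :
    ∃ C : ℝ, 0 < C ∧
      ∀ r : ℝ, 0 < r → ∀ v : ℝ,
        (∫ y in (0 : ℝ)..|v|,
            |y * Real.sin (2 * r * y) / r ^ 2 - 2 * Real.sin (r * y) ^ 2 / r ^ 3|) ≤
          C * r * |v| ^ 5 := by
  refine ⟨4, by norm_num, fun r hr v => ?_⟩
  have h := intervalIntegral.norm_integral_le_of_norm_le_const (a := (0 : ℝ)) (b := |v|)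
    (C := 4 * r * |v| ^ 4)
    (f := fun y => |y * Real.sin (2 * r * y) / r ^ 2 - 2 * Real.sin (r * y) ^ 2 / r ^ 3|) ?_
  · refine (le_abs_self _).trans (h.trans (le_of_eq ?_))
    rw [sub_zero, abs_abs]
    ring
  · intro y hy
    rw [Set.uIoc_of_le (abs_nonneg v)] at hy
    have hy0 : 0 ≤ y := hy.1.le
    have k := key_bound (r * y) (by positivity)
    have e : y * Real.sin (2 * r * y) / r ^ 2 - 2 * Real.sin (r * y) ^ 2 / r ^ 3
        = 2 * Real.sin (r * y) * (r * y * Real.cos (r * y) - Real.sin (r * y)) / r ^ 3 := by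
      rw [mul_assoc 2 r y, Real.sin_two_mul]
      field_simp
    rw [Real.norm_eq_abs, abs_abs, e, abs_div, abs_of_pos (pow_pos hr 3),
      div_le_iff₀ (pow_pos hr 3)]
    calc _ ≤ 4 * (r * y) ^ 4 := k
      _ = 4 * r * y ^ 4 * r ^ 3 := by ring
      _ ≤ 4 * r * |v| ^ 4 * r ^ 3 := by
        have := hy.2
        gcongr
end

section
/- Let K > 0, let N₁ be an integer, and let φ : (0,∞) → ℝ satisfy φ(r) = N₁π for all r ≤ 1 and φ(r) = 0 for all r ≥ 2. Suppose v : (0,∞) → ℝ satisfies |v(r)| ≤ K·min(r^{−3/2}, r^{−1/2}) for all r > 0, and set u(r) = r·v(r) + φ(r). Then, with C = max(K, √2), for all r > 0: |sin(u(r))| ≤ C·min(r^{1/2}, r^{−1/2}), and consequently 0 ≤ sin²(u(r))/r² ≤ C²·min(r^{−1}, r^{−3}). -/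
/-- Pointwise decay of `sin u` and of `Ã - 1 = sin²(u)/r²` for `u = r·v + φ`,
where `φ` is the radial cutoff equal to `N₁π` for `r ≤ 1` and to `0` for `r ≥ 2`,
and `|v(r)| ≤ K·min(r^{-3/2}, r^{-1/2})`. -/
theorem stmt_17 (K : ℝ) (hK : 0 < K) (N₁ : ℤ) (φ v u : ℝ → ℝ)
    (hφ1 : ∀ r : ℝ, 0 < r → r ≤ 1 → φ r = (N₁ : ℝ) * Real.pi)
    (hφ2 : ∀ r : ℝ, 2 ≤ r → φ r = 0)
    (hv : ∀ r : ℝ, 0 < r → |v r| ≤ K * min (r ^ (-(3 / 2) : ℝ)) (r ^ (-(1 / 2) : ℝ)))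
    (hu : ∀ r : ℝ, u r = r * v r + φ r) :
    ∀ r : ℝ, 0 < r →
      |Real.sin (u r)| ≤
          max K (Real.sqrt 2) * min (r ^ ((1 / 2) : ℝ)) (r ^ (-(1 / 2) : ℝ)) ∧
      0 ≤ Real.sin (u r) ^ 2 / r ^ 2 ∧
      Real.sin (u r) ^ 2 / r ^ 2 ≤
        max K (Real.sqrt 2) ^ 2 * min (r ^ (-(1 : ℝ))) (r ^ (-(3 : ℝ))) := by
  intro r hr
  have hs : 0 < r ^ ((1 / 2) : ℝ) := Real.rpow_pos_of_pos hr _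
  have hv' := hv r hr
  have h1 : r ^ (-(1 / 2) : ℝ) = (r ^ ((1 / 2) : ℝ))⁻¹ := Real.rpow_neg hr.le _
  have h2 : r ^ ((1 / 2) : ℝ) * r ^ ((1 / 2) : ℝ) = r := by
    rw [← Real.rpow_add hr]; norm_num
  have h3 : r * r ^ (-(3 / 2) : ℝ) = r ^ (-(1 / 2) : ℝ) := by
    nth_rewrite 1 [← Real.rpow_one r]
    rw [← Real.rpow_add hr]; norm_num
  have h4 : r * r ^ (-(1 / 2) : ℝ) = r ^ ((1 / 2) : ℝ) := by
    nth_rewrite 1 [← Real.rpow_one r]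
    rw [← Real.rpow_add hr]; norm_num
  have hrv : |r * v r| ≤ K * min (r ^ ((1 / 2) : ℝ)) (r ^ (-(1 / 2) : ℝ)) := by
    rw [abs_mul, abs_of_pos hr]
    calc r * |v r| ≤ r * (K * min (r ^ (-(3 / 2) : ℝ)) (r ^ (-(1 / 2) : ℝ))) := by gcongr
      _ = K * (r * min (r ^ (-(3 / 2) : ℝ)) (r ^ (-(1 / 2) : ℝ))) := by ring
      _ = _ := by rw [mul_min_of_nonneg _ _ hr.le, h3, h4, min_comm]
  have hm0 : 0 < min (r ^ ((1 / 2) : ℝ)) (r ^ (-(1 / 2) : ℝ)) :=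
    lt_min hs (Real.rpow_pos_of_pos hr _)
  have hrv' : |r * v r| ≤
      max K (Real.sqrt 2) * min (r ^ ((1 / 2) : ℝ)) (r ^ (-(1 / 2) : ℝ)) :=
    hrv.trans (mul_le_mul_of_nonneg_right (le_max_left _ _) hm0.le)
  have key : |Real.sin (u r)| ≤
      max K (Real.sqrt 2) * min (r ^ ((1 / 2) : ℝ)) (r ^ (-(1 / 2) : ℝ)) := by
    rw [hu]
    rcases le_or_gt r 1 with hr1 | hr1
    · rw [hφ1 r hr hr1, Real.sin_add_int_mul_pi, abs_mul, abs_zpow, abs_neg, abs_one, one_zpow,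
        one_mul]
      exact Real.abs_sin_le_abs.trans hrv'
    rcases le_or_gt 2 r with hr2 | hr2
    · rw [hφ2 r hr2, add_zero]
      exact Real.abs_sin_le_abs.trans hrv'
    refine (Real.abs_sin_le_one _).trans ?_
    have hs1 : 1 ≤ r ^ ((1 / 2) : ℝ) := Real.one_le_rpow hr1.le (by norm_num)
    have hmin : min (r ^ ((1 / 2) : ℝ)) (r ^ (-(1 / 2) : ℝ)) = (r ^ ((1 / 2) : ℝ))⁻¹ := by
      rw [h1]; exact min_eq_right ((inv_le_one_of_one_le₀ hs1).trans hs1)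
    rw [hmin, ← div_eq_mul_inv, one_le_div hs, ← Real.sqrt_eq_rpow]
    exact (Real.sqrt_le_sqrt hr2.le).trans (le_max_right _ _)
  refine ⟨key, by positivity, ?_⟩
  have h5 : (min (r ^ ((1 / 2) : ℝ)) (r ^ (-(1 / 2) : ℝ))) ^ 2
      ≤ min (r ^ (-(1 : ℝ))) (r ^ (-(3 : ℝ))) * r ^ 2 := by
    have e1 : r ^ (-(1 : ℝ)) = r⁻¹ := Real.rpow_neg_one r
    have e3 : r ^ (-(3 : ℝ)) = (r ^ 3)⁻¹ := by
      rw [Real.rpow_neg hr.le]; norm_cast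
    rw [min_mul_of_nonneg _ _ (by positivity : (0 : ℝ) ≤ r ^ 2), e1, e3]
    refine le_min ?_ ?_
    · calc _ ≤ (r ^ ((1 / 2) : ℝ)) ^ 2 := pow_le_pow_left₀ hm0.le (min_le_left _ _) 2
        _ = r := by rw [sq, h2]
        _ = _ := by field_simp
        _ ≤ _ := le_rfl
    · calc _ ≤ (r ^ (-(1 / 2) : ℝ)) ^ 2 := pow_le_pow_left₀ hm0.le (min_le_right _ _) 2
        _ = r⁻¹ := by rw [h1, inv_pow, sq, h2]
        _ = (r ^ 3)⁻¹ * r ^ 2 := by field_simp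
  rw [div_le_iff₀ (by positivity), ← sq_abs]
  calc _ ≤ _ := pow_le_pow_left₀ (abs_nonneg _) key 2
    _ = _ := mul_pow _ _ _
    _ ≤ _ := mul_le_mul_of_nonneg_left h5 (sq_nonneg _)
    _ = _ := by ring
end

section
/- There exists a constant C > 0 such that for every r > 0 and all v, w ∈ ℝ, |−2·sin²(rv)/r³ + sin(2rv)·(v + r·w)/r²| ≤ C·(r·v⁴ + |v|·|w|). -/
theorem aux_nonneg (x : ℝ) (hx : 0 ≤ x) : |x * Real.cos x - Real.sin x| ≤ 5 / 2 * x ^ 3 := by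
  have h1 := Real.one_sub_sq_div_two_le_cos (x := x)
  have h2 := Real.cos_le_one x
  have h3 := Real.sin_le hx
  have h4 : x - Real.sin x ≤ 2 * x ^ 3 := by
    rcases hx.eq_or_lt with h | h
    · subst h; simp
    · have h6 := Real.sin_gt_sub_cube h
      have : 0 < x ^ 3 := by positivity
      linarith
  have h7 := mul_le_mul_of_nonneg_left h1 hx
  have h8 := mul_le_mul_of_nonneg_left h2 hx
  have h9 : 0 ≤ x ^ 3 := by positivity
  rw [abs_le]
  constructor <;> nlinarith

theorem aux_abs_s19 (x : ℝ) : |x * Real.cos x - Real.sin x| ≤ 5 / 2 * |x| ^ 3 := by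
  rcases le_total 0 x with h | h
  · rw [abs_of_nonneg h]; exact aux_nonneg x h
  · have := aux_nonneg (-x) (by linarith)
    rw [Real.cos_neg, Real.sin_neg] at this
    rw [abs_of_nonpos h, ← abs_neg]
    convert this using 2
    ring

/-- Estimate, in the region where the cutoff is constant, of
`|-2·sin²(rv)/r³ + sin(2rv)·(v + r·w)/r²| ≤ C·(r·v⁴ + |v|·|w|)`
with an absolute constant `C`. -/
theorem stmt_19 :
    ∃ C : ℝ, 0 < C ∧
      ∀ r : ℝ, 0 < r → ∀ v w : ℝ,
        |(-2) * Real.sin (r * v) ^ 2 / r ^ 3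
            + Real.sin (2 * (r * v)) * (v + r * w) / r ^ 2| ≤
          C * (r * v ^ 4 + |v| * |w|) := by
  refine ⟨5, by norm_num, fun r hr v w => ?_⟩
  have e : (-2) * Real.sin (r * v) ^ 2 / r ^ 3
            + Real.sin (2 * (r * v)) * (v + r * w) / r ^ 2
      = 2 * Real.sin (r * v) * ((r * v) * Real.cos (r * v) - Real.sin (r * v)) / r ^ 3
        + Real.sin (2 * (r * v)) * w / r := by
    rw [Real.sin_two_mul]
    field_simp
    ring
  rw [e]
  have hs : ∀ y : ℝ, |Real.sin y| ≤ |y| := fun y => Real.abs_sin_le_abs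
  have a1 : |2 * Real.sin (r * v) * ((r * v) * Real.cos (r * v) - Real.sin (r * v)) / r ^ 3|
      ≤ 5 * (r * v ^ 4) := by
    rw [abs_div, abs_mul, abs_mul, abs_two, abs_of_pos (pow_pos hr 3), div_le_iff₀ (pow_pos hr 3)]
    calc _ ≤ 2 * |r * v| * (5 / 2 * |r * v| ^ 3) :=
          mul_le_mul (mul_le_mul_of_nonneg_left (hs _) (by norm_num)) (aux_abs_s19 _)
            (abs_nonneg _) (by positivity)
      _ = 5 * |r * v| ^ 4 := by ring
      _ = 5 * (r * v) ^ 4 := by rw [Even.pow_abs (by decide)]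
      _ = _ := by ring
  have a2 : |Real.sin (2 * (r * v)) * w / r| ≤ 2 * (|v| * |w|) := by
    rw [abs_div, abs_mul, abs_of_pos hr, div_le_iff₀ hr]
    calc _ ≤ |2 * (r * v)| * |w| := mul_le_mul_of_nonneg_right (hs _) (abs_nonneg _)
      _ = _ := by rw [abs_mul, abs_mul, abs_two, abs_of_pos hr]; ring
  have a3 : 0 ≤ |v| * |w| := by positivity
  refine (abs_add_le _ _).trans ?_
  linarith
end
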